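/- arXiv:2510.02892 — 3 statements merged into one kernel-verified Lean document; each statement's English description precedes it below -/
import Mathlib

section
/- Let α be a nonempty finite type, let π₀ be a probability distribution on α, and let g : α → ℝ satisfy g z > 0 for all z. Define the normalizer Z = ∑ z, g z * π₀ z and the distribution π⋆ z = g z * π₀ z / Z. Then Z > 0, and for every positive probability distribution π on α one has ∑ z, π₀ z * g z * Real.log (π z) ≤ ∑ z, π₀ z * g z * Real.log (π⋆ z). In other words, π⋆ maximizes the weighted log-likelihood objective π ↦ ∑ z, π₀ z * g z * log (π z) over positive probability distributions. -/
/-!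
The weights `g z * π₀ z` are `Z` times the distribution `π⋆`, so up to the positive factor `Z` the
objective at `π` is the negative cross-entropy of `π` relative to `π⋆`. By Gibbs' inequality, the
summed form of `log x ≤ x - 1` at `x = π z / π⋆ z`, it is largest at `π = π⋆`.
-/

theorem mul_log_le_mul_log_self_add_sub {p q : ℝ} (hp : 0 ≤ p) (hq : 0 ≤ q)
    (hqp : q = 0 → p = 0) : p * Real.log q ≤ p * Real.log p + (q - p) := by
  rcases hp.eq_or_lt with rfl | hp
  · simpa using hq
  have hq : 0 < q := hq.lt_of_ne' (mt hqp hp.ne')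
  have hlog : Real.log q - Real.log p ≤ q / p - 1 := by
    rw [← Real.log_div hq.ne' hp.ne']
    exact Real.log_le_sub_one_of_pos (div_pos hq hp)
  calc p * Real.log q = p * Real.log p + p * (Real.log q - Real.log p) := by ring
    _ ≤ p * Real.log p + p * (q / p - 1) := by gcongr
    _ = p * Real.log p + (q - p) := by field_simp

section FiniteSums

variable {ι : Type*} {s : Finset ι}

theorem sum_mul_log_le_sum_mul_log_self {p q : ι → ℝ} (hp : ∀ i ∈ s, 0 ≤ p i)
    (hq : ∀ i ∈ s, 0 ≤ q i) (hqp : ∀ i ∈ s, q i = 0 → p i = 0)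
    (hsum : ∑ i ∈ s, q i ≤ ∑ i ∈ s, p i) :
    ∑ i ∈ s, p i * Real.log (q i) ≤ ∑ i ∈ s, p i * Real.log (p i) :=
  calc ∑ i ∈ s, p i * Real.log (q i)
      ≤ ∑ i ∈ s, (p i * Real.log (p i) + (q i - p i)) :=
        Finset.sum_le_sum fun i hi =>
          mul_log_le_mul_log_self_add_sub (hp i hi) (hq i hi) (hqp i hi)
    _ = ∑ i ∈ s, p i * Real.log (p i) + (∑ i ∈ s, q i - ∑ i ∈ s, p i) := by
        rw [Finset.sum_add_distrib, Finset.sum_sub_distrib]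
    _ ≤ ∑ i ∈ s, p i * Real.log (p i) := by linarith

theorem sum_mul_log_le_sum_mul_log_div_sum {w q : ι → ℝ} (hw : ∀ i ∈ s, 0 ≤ w i)
    (hw_sum : 0 < ∑ i ∈ s, w i) (hq : ∀ i ∈ s, 0 ≤ q i) (hqw : ∀ i ∈ s, q i = 0 → w i = 0)
    (hq_sum : ∑ i ∈ s, q i ≤ 1) :
    ∑ i ∈ s, w i * Real.log (q i) ≤ ∑ i ∈ s, w i * Real.log (w i / ∑ j ∈ s, w j) := by
  set W := ∑ j ∈ s, w j with hW
  have gibbs : ∑ i ∈ s, w i / W * Real.log (q i) ≤ ∑ i ∈ s, w i / W * Real.log (w i / W) := by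
    refine sum_mul_log_le_sum_mul_log_self (fun i hi => div_nonneg (hw i hi) hw_sum.le) hq
      (fun i hi hqi => by rw [hqw i hi hqi, zero_div]) ?_
    rwa [← Finset.sum_div, ← hW, div_self hw_sum.ne']
  simp_rw [div_mul_eq_mul_div, ← Finset.sum_div] at gibbs
  exact (div_le_div_iff_of_pos_right hw_sum).mp gibbs

/-- The support condition on `π` confines the junk value `log 0 = 0` to terms of weight `0`; since
`π⋆` satisfies it, `π⋆` is itself a competitor. -/
theorem weighted_loglik_maximizer_general {π₀ g : ι → ℝ} (hw : ∀ z ∈ s, 0 ≤ g z * π₀ z)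
    (hw_ne : ∃ z ∈ s, g z * π₀ z ≠ 0) {Z : ℝ} (hZ : Z = ∑ z ∈ s, g z * π₀ z)
    {πstar : ι → ℝ} (hπstar : ∀ z ∈ s, πstar z = g z * π₀ z / Z) :
    0 < Z ∧
      ∀ π : ι → ℝ, (∀ z ∈ s, 0 ≤ π z) → (∀ z ∈ s, π z = 0 → g z * π₀ z = 0) →
        ∑ z ∈ s, π z ≤ 1 →
        ∑ z ∈ s, π₀ z * g z * Real.log (π z) ≤ ∑ z ∈ s, π₀ z * g z * Real.log (πstar z) := by
  subst hZ
  obtain ⟨z, hz, hwz⟩ := hw_ne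
  have hZ_pos : 0 < ∑ z ∈ s, g z * π₀ z :=
    Finset.sum_pos' hw ⟨z, hz, (hw z hz).lt_of_ne' hwz⟩
  refine ⟨hZ_pos, fun π hπ hπ_supp hπ_sum => ?_⟩
  calc ∑ z ∈ s, π₀ z * g z * Real.log (π z)
      = ∑ z ∈ s, g z * π₀ z * Real.log (π z) := by simp only [mul_comm]
    _ ≤ ∑ z ∈ s, g z * π₀ z * Real.log (g z * π₀ z / ∑ y ∈ s, g y * π₀ y) :=
        sum_mul_log_le_sum_mul_log_div_sum hw hZ_pos hπ hπ_supp hπ_sum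
    _ = ∑ z ∈ s, π₀ z * g z * Real.log (πstar z) :=
        Finset.sum_congr rfl fun z hz => by rw [hπstar z hz, mul_comm (g z)]

end FiniteSums

/-- Lemma 1 (existence of maximizer): the normalized reweighting
`π⋆ z = g z * π₀ z / Z` maximizes the weighted log-likelihood objective
`π ↦ ∑ z, π₀ z * g z * log (π z)` over positive probability distributions. -/
theorem weighted_loglik_maximizer
    {α : Type*} [Fintype α] [Nonempty α]
    (π₀ : α → ℝ) (hπ₀_nonneg : ∀ z, 0 ≤ π₀ z) (hπ₀_sum : ∑ z, π₀ z = 1)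
    (g : α → ℝ) (hg : ∀ z, 0 < g z)
    (Z : ℝ) (hZ : Z = ∑ z, g z * π₀ z)
    (πstar : α → ℝ) (hπstar : ∀ z, πstar z = g z * π₀ z / Z) :
    0 < Z ∧
      ∀ π : α → ℝ, (∀ z, 0 < π z) → (∑ z, π z = 1) →
        ∑ z, π₀ z * g z * Real.log (π z) ≤
          ∑ z, π₀ z * g z * Real.log (πstar z) := by
  obtain ⟨z, hz, hπ₀z⟩ := Finset.exists_ne_zero_of_sum_ne_zero (hπ₀_sum ▸ one_ne_zero)
  have ⟨hZ_pos, hmax⟩ := weighted_loglik_maximizer_general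
    (fun z _ => mul_nonneg (hg z).le (hπ₀_nonneg z)) ⟨z, hz, mul_ne_zero (hg z).ne' hπ₀z⟩
    hZ fun z _ => hπstar z
  exact ⟨hZ_pos, fun π hπ hπ_sum =>
    hmax π (fun z _ => (hπ z).le) (fun z _ h => absurd h (hπ z).ne') hπ_sum.le⟩
end

section
/- Let α be a nonempty finite type, let π₀ be a positive probability distribution on α, and let g : α → ℝ satisfy g z > 0 for all z. Define Z = ∑ z, g z * π₀ z and π⋆ z = g z * π₀ z / Z. Then for a positive probability distribution π on α, the equality ∑ z, π₀ z * g z * Real.log (π z) = ∑ z, π₀ z * g z * Real.log (π⋆ z) holds if and only if π = π⋆. In particular, π⋆ is the unique maximizer of the weighted log-likelihood objective over positive probability distributions. -/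
/-!
After division by the total weight, the difference between the two log-likelihoods is minus the
relative entropy `∑ p log (p / q)` of `p = π⋆` and `q = π`. When the mass of `q` does not exceed
that of `p`, the relative entropy is at least `∑ q * klFun (p / q)`, where
`klFun x = x log x + 1 - x` is nonnegative and vanishes only at `x = 1`; so it is zero only if
`p = q`.
-/

section RelativeEntropy

open InformationTheory

lemma mul_klFun_div_eq {p q : ℝ} (hpq : q = 0 → p = 0) :
    q * klFun (p / q) = p * Real.log p - p * Real.log q + (q - p) := by
  rcases eq_or_ne p 0 with rfl | hp
  · simp [klFun_zero]
  · have hq : q ≠ 0 := mt hpq hp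
    rw [klFun_apply, Real.log_div hp hq]
    field_simp
    ring

lemma mul_klFun_div_nonneg {p q : ℝ} (hp : 0 ≤ p) (hq : 0 ≤ q) :
    0 ≤ q * klFun (p / q) :=
  mul_nonneg hq (klFun_nonneg (div_nonneg hp hq))

lemma mul_klFun_div_eq_zero_iff {p q : ℝ} (hp : 0 ≤ p) (hq : 0 ≤ q) (hpq : q = 0 → p = 0) :
    q * klFun (p / q) = 0 ↔ q = p := by
  rcases eq_or_ne q 0 with rfl | hq0
  · simp [hpq rfl]
  · rw [mul_eq_zero_iff_left hq0, klFun_eq_zero_iff (div_nonneg hp hq),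
      div_eq_one_iff_eq hq0, eq_comm]

variable {α : Type*} {p q : α → ℝ}

lemma summable_mul_log_self_of_summable_mul_log (hp : ∀ z, 0 ≤ p z) (hp_le : ∀ z, p z ≤ 1)
    (hq : ∀ z, 0 ≤ q z) (hpq : ∀ z, q z = 0 → p z = 0) (hp_summable : Summable p)
    (hq_summable : Summable q) (hlog : Summable fun z => p z * Real.log (q z)) :
    Summable fun z => p z * Real.log (p z) := by
  have h_lower (z : α) : p z * Real.log (q z) - (q z - p z) ≤ p z * Real.log (p z) := by
    linarith [mul_klFun_div_eq (hpq z), mul_klFun_div_nonneg (hp z) (hq z)]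
  have h_nonpos (z : α) : p z * Real.log (p z) ≤ 0 := Real.mul_log_nonpos (hp z) (hp_le z)
  refine (hlog.sub (hq_summable.sub hp_summable)).abs.of_norm_bounded fun z => ?_
  rw [Real.norm_eq_abs]
  exact abs_le_abs_of_nonpos (h_nonpos z) (h_lower z)

theorem tsum_mul_log_eq_tsum_mul_log_self_iff (hp : ∀ z, 0 ≤ p z) (hq : ∀ z, 0 ≤ q z)
    (hpq : ∀ z, q z = 0 → p z = 0) (hp_summable : Summable p) (hq_summable : Summable q)
    (hmass : ∑' z, q z ≤ ∑' z, p z) (hlogq : Summable fun z => p z * Real.log (q z))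
    (hlogp : Summable fun z => p z * Real.log (p z)) :
    ∑' z, p z * Real.log (q z) = ∑' z, p z * Real.log (p z) ↔ q = p := by
  refine ⟨fun h => ?_, fun h => by rw [h]⟩
  have hkl_nonneg (z : α) : 0 ≤ q z * klFun (p z / q z) :=
    mul_klFun_div_nonneg (hp z) (hq z)
  have hkl_hasSum : HasSum (fun z => q z * klFun (p z / q z))
      (∑' z, q z - ∑' z, p z) := by
    simp_rw [mul_klFun_div_eq (hpq _)]
    simpa [h] using (hlogp.hasSum.sub hlogq.hasSum).add (hq_summable.hasSum.sub hp_summable.hasSum)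
  have hmass_eq : ∑' z, q z - ∑' z, p z = 0 :=
    le_antisymm (sub_nonpos.2 hmass) (hkl_hasSum.nonneg hkl_nonneg)
  have hkl_zero := (hasSum_zero_iff_of_nonneg hkl_nonneg).1 (hmass_eq ▸ hkl_hasSum)
  exact funext fun z => (mul_klFun_div_eq_zero_iff (hp z) (hq z) (hpq z)).1 (congrFun hkl_zero z)

end RelativeEntropy

theorem weighted_loglik_maximizer_unique_general
    {α : Type*} {w π : α → ℝ} {Z : ℝ} (hw : ∀ z, 0 ≤ w z) (hwZ : HasSum w Z) (hZ : 0 < Z)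
    (hπ : ∀ z, 0 ≤ π z) (hwπ : ∀ z, π z = 0 → w z = 0) (hπ_summable : Summable π)
    (hπ_mass : ∑' z, π z ≤ 1) (hlog : Summable fun z => w z * Real.log (π z)) :
    ∑' z, w z * Real.log (π z) = ∑' z, w z * Real.log (w z / Z) ↔ π = fun z => w z / Z := by
  have hp (z : α) : 0 ≤ w z / Z := div_nonneg (hw z) hZ.le
  have hp_hasSum : HasSum (fun z => w z / Z) 1 := div_self hZ.ne' ▸ hwZ.div_const Z
  have hp_le (z : α) : w z / Z ≤ 1 := le_hasSum hp_hasSum z fun i _ => hp i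
  have hpπ (z : α) (hz : π z = 0) : w z / Z = 0 := by rw [hwπ z hz, zero_div]
  have hlogπ : Summable fun z => w z / Z * Real.log (π z) := by
    simpa only [div_mul_eq_mul_div] using hlog.div_const Z
  have hlogp := summable_mul_log_self_of_summable_mul_log hp hp_le hπ hpπ hp_hasSum.summable
    hπ_summable hlogπ
  rw [← tsum_mul_log_eq_tsum_mul_log_self_iff hp hπ hpπ hp_hasSum.summable hπ_summable
    (hp_hasSum.tsum_eq.symm ▸ hπ_mass) hlogπ hlogp]
  simp_rw [div_mul_eq_mul_div, tsum_div_const, div_left_inj' hZ.ne']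

/-- Uniqueness part of Lemma 1: equality in the weighted Gibbs inequality
holds iff `π = π⋆`, so `π⋆` is the unique maximizer of the weighted
log-likelihood objective over positive probability distributions. -/
theorem weighted_loglik_maximizer_unique
    {α : Type*} [Fintype α] [Nonempty α]
    (π₀ : α → ℝ) (hπ₀_pos : ∀ z, 0 < π₀ z) (hπ₀_sum : ∑ z, π₀ z = 1)
    (g : α → ℝ) (hg : ∀ z, 0 < g z)
    (Z : ℝ) (hZ : Z = ∑ z, g z * π₀ z)
    (πstar : α → ℝ) (hπstar : ∀ z, πstar z = g z * π₀ z / Z)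
    (π : α → ℝ) (hπ_pos : ∀ z, 0 < π z) (hπ_sum : ∑ z, π z = 1) :
    (∑ z, π₀ z * g z * Real.log (π z) =
      ∑ z, π₀ z * g z * Real.log (πstar z)) ↔ π = πstar := by
  have hw (z : α) : 0 < g z * π₀ z := mul_pos (hg z) (hπ₀_pos z)
  have hZ_pos : 0 < Z := hZ ▸ Finset.sum_pos (fun z _ => hw z) Finset.univ_nonempty
  obtain rfl : πstar = fun z => g z * π₀ z / Z := funext hπstar
  simpa only [tsum_fintype, mul_comm (π₀ _)] using
    weighted_loglik_maximizer_unique_general (fun z => (hw z).le) (hZ ▸ hasSum_fintype _) hZ_pos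
      (fun z => (hπ_pos z).le) (fun z hz => absurd hz (hπ_pos z).ne') .of_finite
      (by rw [tsum_fintype, hπ_sum]) .of_finite
end

section
/- Let α be a nonempty finite type, let π₀ be a positive probability distribution on α, let β > 0, and let r_1, …, r_m : α → ℝ be a sequence of reward functions, with the convention r_0 = 0. Define the telescoping transforms g_j z = Real.exp ((r_j z - r_{j-1} z) / β) for j = 1, …, m, and recursively π_j z = g_j z * π_{j-1} z / (∑ w, g_j w * π_{j-1} w). Then for every z ∈ α, π_m z = Real.exp (r_m z / β) * π₀ z / (∑ w, Real.exp (r_m w / β) * π₀ w). That is, with this choice of reward transforms, the m-th iterate of the normalized reweighting iteration depends only on the most recent reward r_m and has the KL-regularized exponential-tilting form exp(r_m/β) · π₀ (up to normalization). -/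
/-!
Exponential tilting is an additive action of exponents on probability densities: tilting by `0`
is the identity, and tilting by `f` and then by `g` is tilting by `g + f`, because the first
normalizing constant cancels against the second. Tilting successively by the increments
`f (j + 1) - f j` therefore telescopes to a single tilting by `f m - f 0`.
-/

open MeasureTheory

section ExpTilt

variable {α : Type*} [MeasurableSpace α] {ν : Measure α} {f p : α → ℝ}

/-- The exponential tilting `exp f · p / ∫ exp f · p ∂ν` of a density `p` with respect to `ν`,
i.e. the form of the optimal policy under KL regularization towards `p`. It acts on real densities
rather than, as `Measure.tilted` does, on measures, so that identities between iterates hold at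
every point and not only almost everywhere. -/
noncomputable def expTilt (ν : Measure α) (f p : α → ℝ) : α → ℝ :=
  fun z ↦ Real.exp (f z) * p z / ∫ w, Real.exp (f w) * p w ∂ν

theorem expTilt_zero (hp : ∫ z, p z ∂ν = 1) : expTilt ν 0 p = p := by
  funext z
  simp [expTilt, hp]

theorem expTilt_expTilt (hfp : ∫ z, Real.exp (f z) * p z ∂ν ≠ 0) (g : α → ℝ) :
    expTilt ν g (expTilt ν f p) = expTilt ν (g + f) p := by
  have exp_mul_expTilt (z : α) : Real.exp (g z) * expTilt ν f p z =
      Real.exp ((g + f) z) * p z / ∫ w, Real.exp (f w) * p w ∂ν := by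
    rw [expTilt, Pi.add_apply, Real.exp_add, mul_div_assoc', mul_assoc]
  funext z
  rw [expTilt]
  simp only [exp_mul_expTilt]
  rw [integral_div, div_div_div_cancel_right₀ hfp, expTilt]

theorem integral_exp_mul_pos (hp : 0 ≤ p) (hp_pos : 0 < ∫ z, p z ∂ν)
    (hfp : Integrable (fun z ↦ Real.exp (f z) * p z) ν) :
    0 < ∫ z, Real.exp (f z) * p z ∂ν := by
  have support_eq : Function.support (fun z ↦ Real.exp (f z) * p z) = Function.support p := by
    ext z
    simp [Real.exp_ne_zero]
  have hfp_nonneg : 0 ≤ fun z ↦ Real.exp (f z) * p z :=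
    fun z ↦ mul_nonneg (Real.exp_pos _).le (hp z)
  have hp_int : Integrable p ν := .of_integral_ne_zero hp_pos.ne'
  rw [integral_pos_iff_support_of_nonneg hfp_nonneg hfp, support_eq]
  exact (integral_pos_iff_support_of_nonneg hp hp_int).mp hp_pos

theorem expTilt_count [Fintype α] [MeasurableSingletonClass α] (f p : α → ℝ) (z : α) :
    expTilt Measure.count f p z = Real.exp (f z) * p z / ∑ w, Real.exp (f w) * p w := by
  rw [expTilt, integral_count]

/-- In the notation of `iterated_telescoping_reweighting`, `f j` is `r j / β` and `ν` is the
counting measure. -/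
theorem iterated_telescoping_reweighting_general (m : ℕ)
    (hp : 0 ≤ p) (hp_int : ∫ z, p z ∂ν = 1) (f : ℕ → α → ℝ) (hf0 : f 0 = 0)
    (hfp : ∀ j ≤ m, Integrable (fun z ↦ Real.exp (f j z) * p z) ν)
    (π : ℕ → α → ℝ) (hπ0 : π 0 = p)
    (hrec : ∀ j < m, π (j + 1) = expTilt ν (f (j + 1) - f j) (π j)) :
    π m = expTilt ν (f m) p := by
  induction m with
  | zero => rw [hπ0, hf0, expTilt_zero hp_int]
  | succ n ih =>
    have hπn : π n = expTilt ν (f n) p :=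
      ih (fun j hj ↦ hfp j (by omega)) (fun j hj ↦ hrec j (by omega))
    have mass_pos : 0 < ∫ z, Real.exp (f n z) * p z ∂ν :=
      integral_exp_mul_pos hp (hp_int ▸ one_pos) (hfp n n.le_succ)
    rw [hrec n n.lt_succ_self, hπn, expTilt_expTilt mass_pos.ne', sub_add_cancel]

end ExpTilt

/-- Telescoping identity in the proof of the Proposition (Appendix A.3): with
`g j z = exp ((r j z - r (j-1) z) / β)` and the convention `r 0 = 0`, the m-th
iterate of the normalized reweighting iteration is the exponential tilting of
`π₀` by the most recent reward `r m / β`. -/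
theorem iterated_telescoping_reweighting
    {α : Type*} [Fintype α] [Nonempty α] (m : ℕ)
    (π₀ : α → ℝ) (hπ₀_pos : ∀ z, 0 < π₀ z) (hπ₀_sum : ∑ z, π₀ z = 1)
    (β : ℝ) (hβ : 0 < β)
    (r : ℕ → α → ℝ) (hr0 : ∀ z, r 0 z = 0)
    (g : ℕ → α → ℝ)
    (hg : ∀ j, 1 ≤ j → j ≤ m → ∀ z, g j z = Real.exp ((r j z - r (j - 1) z) / β))
    (π : ℕ → α → ℝ) (hπ0 : π 0 = π₀)
    (hrec : ∀ j, 1 ≤ j → j ≤ m → ∀ z,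
      π j z = g j z * π (j - 1) z / (∑ w, g j w * π (j - 1) w)) :
    ∀ z, π m z =
      Real.exp (r m z / β) * π₀ z /
        (∑ w, Real.exp (r m w / β) * π₀ w) := by
  let _ : MeasurableSpace α := ⊤
  have hrec_tilt : ∀ j < m, π (j + 1) =
      expTilt Measure.count ((fun z ↦ r (j + 1) z / β) - fun z ↦ r j z / β) (π j) := by
    intro j hj
    funext z
    rw [hrec (j + 1) (by omega) (by omega), expTilt_count]
    simp only [hg (j + 1) (by omega) (by omega), add_tsub_cancel_right, Pi.sub_apply, sub_div]
  have hπm : π m = expTilt Measure.count (fun z ↦ r m z / β) π₀ :=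
    iterated_telescoping_reweighting_general m (fun z ↦ (hπ₀_pos z).le)
      (by rw [integral_count, hπ₀_sum]) (fun j z ↦ r j z / β) (by ext z; simp [hr0])
      (fun _ _ ↦ .of_finite) π hπ0 hrec_tilt
  intro z
  rw [hπm, expTilt_count]
end
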